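/- Let ℓ ≥ 1 be an integer, let ω₁, ω₂ ∈ ℝ, set a = exp(i ω₁), f = −1 + a⁻¹, ŝ₀ = a^ℓ / (1 − ℓ·f), and let β₀ ∈ ℂ^ℓ have entries (β₀)_j = ŝ₀·((1 + f) − f·j). Define ℬ₁ = exp(−i ω₂)·D𝟙·e₁ᵀ − 2·I and b₁ = −exp(i ω₂)·D𝟙. Then every β₁ ∈ ℂ^ℓ satisfying (B₀ + f·e₁·e₁ᵀ) β₁ = b₁ − ℬ₁ β₀ has first entry (β₁)₁ = −a^{−ℓ} · ŝ₀ · [ (1/3)·ℓ(ℓ+1)·(3·a⁻¹ + (1 − a⁻¹)(ℓ + 2))·ŝ₀ + (exp(i ω₂) + ŝ₀·exp(−i ω₂))·z₁(a) ]. -/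

import Mathlib

open Matrix Complex

/-- The ℓ×ℓ complex tridiagonal matrix B₀ with (B₀)₁₁ = −1, other diagonal
entries −2, and super/sub-diagonal entries 1. -/
def B0C (ℓ : ℕ) : Matrix (Fin ℓ) (Fin ℓ) ℂ := fun i j =>
  if i = j then (if (i : ℕ) = 0 then -1 else -2)
  else if (i : ℕ) + 1 = (j : ℕ) ∨ (j : ℕ) + 1 = (i : ℕ) then 1 else 0

/-- The first standard basis vector e₁ of ℂ^ℓ. -/
def e1 (ℓ : ℕ) : Fin ℓ → ℂ := fun j => if (j : ℕ) = 0 then 1 else 0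

/-- The vector D𝟙 ∈ ℂ^ℓ with entries (D𝟙)_j = a^{j-1}. -/
def D1 (ℓ : ℕ) (a : ℂ) : Fin ℓ → ℂ := fun j => a ^ (j : ℕ)

open Classical in
/-- The first entry z₁(a) of the solution z of B₀ z = D𝟙. -/
noncomputable def z1 (ℓ : ℕ) (a : ℂ) : ℂ :=
  if a = 1 then -((ℓ : ℂ) * (ℓ + 1)) / 2
  else ((ℓ : ℂ) * (a - 1) + a * (1 - a ^ ℓ)) / (a - 1) ^ 2

/-!
The vector `w = (ℓ, ℓ - 1, …, 1)` is affine and vanishes just past the Dirichlet end, so its second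
differences vanish and `wᵀ B₀ = -e₁ᵀ`. Pairing `(B₀ + f e₁ e₁ᵀ) x = g` with `w` therefore isolates
the first entry, `(1 - ℓ f) x₁ = -wᵀ g`, and it remains to evaluate `wᵀ` on `D𝟙`, `e₁` and the
affine vector `β₀`. The factor `1 - ℓ f` is nonzero because `|ℓ a⁻¹| = ℓ < ℓ + 1` on the unit
circle.
-/

section WeightedSums

open Finset

theorem sum_range_succ_sub_mul {R : Type*} [CommRing R] (c : ℕ → R) (n : ℕ) :
    ∑ i ∈ range (n + 1), (((n + 1 : ℕ) : R) - i) * c i =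
      ∑ i ∈ range n, ((n : R) - i) * c i + ∑ i ∈ range (n + 1), c i := by
  have extend : ∑ i ∈ range n, ((n : R) - i) * c i = ∑ i ∈ range (n + 1), ((n : R) - i) * c i := by
    simp [sum_range_succ]
  rw [extend, ← sum_add_distrib]
  refine sum_congr rfl fun i _ => ?_
  push_cast
  ring

variable {K : Type*} [Field K]

theorem sum_range_sub_mul_pow {x : K} (hx : x ≠ 1) (n : ℕ) :
    ∑ i ∈ range n, ((n : K) - i) * x ^ i = -((n * (x - 1) + x * (1 - x ^ n)) / (x - 1) ^ 2) := by
  have hx' : x - 1 ≠ 0 := sub_ne_zero.2 hx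
  induction n with
  | zero => simp
  | succ n ih =>
    rw [sum_range_succ_sub_mul, ih, geom_sum_eq hx]
    field_simp
    push_cast
    ring

variable [CharZero K]

theorem sum_range_add_mul (b c : K) (n : ℕ) :
    ∑ i ∈ range n, (b + c * i) = b * n + c * (n * (n - 1) / 2) := by
  induction n with
  | zero => simp
  | succ n ih =>
    rw [sum_range_succ, ih]
    push_cast
    ring

theorem sum_range_sub_mul_add_mul (b c : K) (n : ℕ) :
    ∑ i ∈ range n, ((n : K) - i) * (b + c * i) =
      b * (n * (n + 1) / 2) + c * ((n - 1) * n * (n + 1) / 6) := by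
  induction n with
  | zero => simp
  | succ n ih =>
    rw [sum_range_succ_sub_mul, ih, sum_range_add_mul]
    push_cast
    ring

end WeightedSums

section SecondDifference

variable {ℓ : ℕ}

theorem B0C_apply (i j : Fin ℓ) :
    B0C ℓ i j = (if (i : ℕ) = j then if (j : ℕ) = 0 then -1 else -2 else 0) +
      (if (i : ℕ) = j + 1 then 1 else 0) + (if (i : ℕ) + 1 = j then 1 else 0) := by
  simp only [B0C, Fin.ext_iff]
  split_ifs <;> first | omega | simp

theorem sum_fin_mul_ite_eq {R : Type*} [NonUnitalNonAssocSemiring R] {u : ℕ → R} (hu : u ℓ = 0)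
    {k : ℕ} (hk : k ≤ ℓ) (c : R) :
    ∑ i : Fin ℓ, u i * (if (i : ℕ) = k then c else 0) = u k * c := by
  rw [Fin.sum_univ_eq_sum_range (fun i => u i * if i = k then c else 0)]
  rcases hk.eq_or_lt with rfl | hk
  · simp [hu]
  · simp [hk]

variable {u : ℕ → ℂ}

theorem vecMul_B0C_zero (hℓ : 0 < ℓ) (hu : u ℓ = 0) :
    ((fun i : Fin ℓ => u i) ᵥ* B0C ℓ) ⟨0, hℓ⟩ = u 1 - u 0 := by
  simp only [vecMul, dotProduct, B0C_apply, mul_add, Finset.sum_add_distrib, zero_add,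
    Nat.add_eq_zero_iff, one_ne_zero, and_false, if_true, if_false, mul_zero, Finset.sum_const_zero,
    sum_fin_mul_ite_eq hu hℓ.le, sum_fin_mul_ite_eq hu (Nat.succ_le_of_lt hℓ)]
  ring

theorem vecMul_B0C_succ (hu : u ℓ = 0) {j : ℕ} (hj : j + 1 < ℓ) :
    ((fun i : Fin ℓ => u i) ᵥ* B0C ℓ) ⟨j + 1, hj⟩ = u j - 2 * u (j + 1) + u (j + 2) := by
  simp only [vecMul, dotProduct, B0C_apply, mul_add, Finset.sum_add_distrib,
    Nat.add_right_cancel_iff, Nat.add_eq_zero_iff, one_ne_zero, and_false, if_false,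
    add_assoc, Nat.reduceAdd, sum_fin_mul_ite_eq hu (show j ≤ ℓ by lia),
    sum_fin_mul_ite_eq hu hj.le, sum_fin_mul_ite_eq hu (show j + 2 ≤ ℓ by lia)]
  ring

end SecondDifference

theorem e1_eq_single {ℓ : ℕ} (hℓ : 0 < ℓ) : e1 ℓ = Pi.single ⟨0, hℓ⟩ 1 := by
  funext j
  simp [e1, Pi.single_apply, Fin.ext_iff]

/-- The vector `w = (ℓ, ℓ - 1, …, 1)`, which is minus the first row of the inverse of `B₀`; pairing
a linear system with it extracts the first entry of the solution. -/
def ramp (ℓ : ℕ) : Fin ℓ → ℂ := fun j => ℓ - (j : ℕ)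

theorem ramp_vecMul_B0C (ℓ : ℕ) : ramp ℓ ᵥ* B0C ℓ = -e1 ℓ := by
  have hend : (ℓ : ℂ) - (ℓ : ℕ) = 0 := sub_self _
  funext ⟨j, hj⟩
  cases j with
  | zero =>
    refine (vecMul_B0C_zero (u := fun i => (ℓ : ℂ) - i) hj hend).trans ?_
    simp [e1]
  | succ k =>
    refine (vecMul_B0C_succ (u := fun i => (ℓ : ℂ) - i) hend hj).trans ?_
    simp only [e1, Pi.neg_apply, Nat.add_eq_zero_iff, one_ne_zero, and_false, if_false]
    push_cast
    ring

theorem ramp_dotProduct_e1 (ℓ : ℕ) : ramp ℓ ⬝ᵥ e1 ℓ = ℓ := by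
  rcases ℓ.eq_zero_or_pos with rfl | hℓ
  · simp
  · simp [e1_eq_single hℓ, ramp]

theorem ramp_dotProduct_D1 (ℓ : ℕ) (a : ℂ) : ramp ℓ ⬝ᵥ D1 ℓ a = -z1 ℓ a := by
  have hsum : ramp ℓ ⬝ᵥ D1 ℓ a = ∑ i ∈ Finset.range ℓ, ((ℓ : ℂ) - i) * a ^ i :=
    Fin.sum_univ_eq_sum_range (fun i => ((ℓ : ℂ) - i) * a ^ i) ℓ
  rw [hsum, z1]
  split_ifs with ha
  · simpa [ha, neg_div] using sum_range_sub_mul_add_mul (1 : ℂ) 0 ℓ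
  · exact sum_range_sub_mul_pow ha ℓ

theorem ramp_dotProduct_add_mul (ℓ : ℕ) (b c : ℂ) :
    ramp ℓ ⬝ᵥ (fun j : Fin ℓ => b + c * (j : ℕ)) =
      b * (ℓ * (ℓ + 1) / 2) + c * ((ℓ - 1) * ℓ * (ℓ + 1) / 6) := by
  rw [← sum_range_sub_mul_add_mul]
  exact Fin.sum_univ_eq_sum_range (fun i => ((ℓ : ℂ) - i) * (b + c * i)) ℓ

theorem ramp_dotProduct_B0C_add_mulVec {ℓ : ℕ} (hℓ : 0 < ℓ) (f : ℂ) (x : Fin ℓ → ℂ) :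
    ramp ℓ ⬝ᵥ (B0C ℓ + f • vecMulVec (e1 ℓ) (e1 ℓ)) *ᵥ x = -((1 - ℓ * f) * x ⟨0, hℓ⟩) := by
  have hrow : ramp ℓ ᵥ* (B0C ℓ + f • vecMulVec (e1 ℓ) (e1 ℓ)) = -(1 - ℓ * f) • e1 ℓ := by
    rw [vecMul_add, ramp_vecMul_B0C, vecMul_smul, vecMul_vecMulVec, ramp_dotProduct_e1]
    module
  rw [dotProduct_mulVec, hrow, smul_dotProduct, e1_eq_single hℓ, single_one_dotProduct,
    smul_eq_mul, neg_mul]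

theorem one_sub_natCast_mul_ne_zero {𝕜 : Type*} [RCLike 𝕜] {a : 𝕜} (ha : 1 ≤ ‖a‖) (n : ℕ) :
    1 - n * (-1 + a⁻¹) ≠ 0 := by
  intro h
  have hnorm : (n : ℝ) + 1 = n * ‖a‖⁻¹ := by
    have heq : ((n + 1 : ℕ) : 𝕜) = n * a⁻¹ := by
      push_cast
      linear_combination h
    rw [← Nat.cast_add_one, ← RCLike.norm_natCast (K := 𝕜), heq, norm_mul, norm_inv,
      RCLike.norm_natCast]
  have hle : (n : ℝ) * ‖a‖⁻¹ ≤ n := mul_le_of_le_one_right n.cast_nonneg (inv_le_one_of_one_le₀ ha)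
  linarith

theorem fd_ellx1_first_order_general (ℓ : ℕ) (hℓ : 0 < ℓ) (p q a f s0 : ℂ) (ha : a ≠ 0)
    (hf : f = -1 + a⁻¹) (hd : 1 - ℓ * f ≠ 0) (hs0 : s0 = a ^ ℓ / (1 - ℓ * f))
    (β₀ β₁ : Fin ℓ → ℂ)
    (hβ₀ : ∀ j : Fin ℓ, β₀ j = s0 * ((1 + f) - f * ((j : ℕ) + 1 : ℂ)))
    (hβ₁ : (B0C ℓ + f • vecMulVec (e1 ℓ) (e1 ℓ)) *ᵥ β₁ =
      (-p) • D1 ℓ a -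
        (q • vecMulVec (D1 ℓ a) (e1 ℓ) - (2 : ℂ) • (1 : Matrix (Fin ℓ) (Fin ℓ) ℂ)) *ᵥ β₀) :
    β₁ ⟨0, hℓ⟩ = -(a ^ (-(ℓ : ℤ))) * s0 *
      ((1 / 3 : ℂ) * ℓ * (ℓ + 1) * (3 * a⁻¹ + (1 - a⁻¹) * (ℓ + 2)) * s0
        + (p + s0 * q) * z1 ℓ a) := by
  have hβ₀_eq : β₀ = fun j : Fin ℓ => s0 + -(s0 * f) * (j : ℕ) := by
    funext j
    rw [hβ₀]
    ring
  have hfirst : e1 ℓ ⬝ᵥ β₀ = s0 := by simp [e1_eq_single hℓ, hβ₀_eq]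
  have hpair : -((1 - ℓ * f) * β₁ ⟨0, hℓ⟩) = (p + s0 * q) * z1 ℓ a + 2 * (ramp ℓ ⬝ᵥ β₀) := by
    rw [← ramp_dotProduct_B0C_add_mulVec, hβ₁]
    simp only [sub_mulVec, smul_mulVec, vecMulVec_mulVec, one_mulVec, dotProduct_sub,
      dotProduct_smul, ramp_dotProduct_D1, hfirst, op_smul_eq_smul, smul_eq_mul]
    ring
  have hscale : a ^ (-(ℓ : ℤ)) * s0 = (1 - ℓ * f)⁻¹ := by
    rw [hs0, _root_.zpow_neg, _root_.zpow_natCast]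
    field_simp
  have hinv : a⁻¹ = f + 1 := by rw [hf]; ring
  rw [hβ₀_eq, ramp_dotProduct_add_mul] at hpair
  rw [neg_mul, hscale, hinv]
  field_simp
  linear_combination -3 * hpair

theorem fd_ellx1_first_order (ℓ : ℕ) (hℓ : 0 < ℓ) (ω₁ ω₂ : ℝ) (a f s0 : ℂ)
    (ha : a = Complex.exp (Complex.I * ω₁)) (hf : f = -1 + a⁻¹)
    (hs0 : s0 = a ^ ℓ / (1 - ℓ * f))
    (β₀ β₁ : Fin ℓ → ℂ)
    (hβ₀ : ∀ j : Fin ℓ, β₀ j = s0 * ((1 + f) - f * ((j : ℕ) + 1 : ℂ)))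
    (hβ₁ : (B0C ℓ + f • Matrix.vecMulVec (e1 ℓ) (e1 ℓ)).mulVec β₁ =
      (-(Complex.exp (Complex.I * ω₂))) • D1 ℓ a -
        (Complex.exp (-(Complex.I * ω₂)) • Matrix.vecMulVec (D1 ℓ a) (e1 ℓ)
          - (2 : ℂ) • (1 : Matrix (Fin ℓ) (Fin ℓ) ℂ)).mulVec β₀) :
    β₁ ⟨0, hℓ⟩ = -(a ^ (-(ℓ : ℤ))) * s0 *
      ((1 / 3 : ℂ) * ℓ * (ℓ + 1) * (3 * a⁻¹ + (1 - a⁻¹) * (ℓ + 2)) * s0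
        + (Complex.exp (Complex.I * ω₂) + s0 * Complex.exp (-(Complex.I * ω₂)))
            * z1 ℓ a) := by
  exact fd_ellx1_first_order_general ℓ hℓ _ _ a f s0 (ha ▸ exp_ne_zero _) hf
    (hf ▸ one_sub_natCast_mul_ne_zero (ha ▸ norm_exp_I_mul_ofReal ω₁).ge ℓ) hs0 β₀ β₁ hβ₀ hβ₁
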